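/- arXiv:1903.07278 — 2 statements merged into one kernel-verified Lean document; each statement's English description precedes it below -/
import Mathlib

section
/- For every vector v ∈ V, the stabilizer {w ∈ W : w(v) = v} of v in the Weyl group W is equal to the subgroup of W generated by the reflections s_α for those roots α ∈ Φ satisfying α^∨(v) = 0 (equivalently, those reflections s_α fixing v). -/
/-!
Fix a vector `p` off all root hyperplanes whose open chamber has `v` in its closure.

The reflections in the walls of that chamber generate the Weyl group. Measure a root by its height
`⟨p, αᵢ^∨⟩`, normalised by the length of `αᵢ` in an invariant inner product. If the hyperplane of
`αᵢ` is not a wall, then some hyperplane `αⱼ^⊥` comes between `p` and its projection to `αᵢ^⊥`,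
both `αⱼ` and `sⱼ αᵢ` have smaller height than `αᵢ`, and `sᵢ` is the conjugate of `s_{sⱼ αᵢ}`
by `sⱼ`.

A word in wall reflections satisfies the exchange property: if `αⱼ^⊥` separates `p` from `w p`, then
`sⱼ w` has a shorter word than `w`. Now let `w = sᵢ u` fix `v`. If `αᵢ^⊥` separates `p` from `w p`,
it passes through `v`, because `v = w v` is in the closure of both chambers; so `sᵢ` fixes `v` and
`u` is a shorter word fixing `v`. Otherwise it separates `p` from `u p`, and by exchange `w` has
a shorter word.
-/

open Module Set

section RootPairing

variable {ι K M N : Type*} [Field K] [AddCommGroup M] [Module K M] [AddCommGroup N] [Module K N]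

section Reflection

variable {P : RootPairing ι K M N} {i j : ι}

lemma coroot'_reflection_eq_sub (x : M) :
    P.coroot' j (P.reflection i x) = P.coroot' j x - P.coroot' i x * P.pairing i j := by
  rw [RootPairing.reflection_apply, map_sub, map_smul, RootPairing.root_coroot'_eq_pairing,
    smul_eq_mul]

lemma coroot'_reflection_self (x : M) : P.coroot' i (P.reflection i x) = -P.coroot' i x := by
  rw [coroot'_reflection_eq_sub, RootPairing.pairing_same]
  ring

lemma reflection_apply_eq_self {x : M} (h : P.coroot' i x = 0) : P.reflection i x = x := by
  rw [RootPairing.reflection_apply, h, zero_smul, sub_zero]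

lemma reflection_mul_self : P.reflection i * P.reflection i = 1 := by
  rw [← sq, P.reflection_sq]

lemma exists_coroot'_comp_eq {w : M ≃ₗ[K] M} (hw : w ∈ Subgroup.closure (range P.reflection))
    (i : ι) : ∃ j, ∀ x, P.coroot' i (w x) = P.coroot' j x := by
  induction hw using Subgroup.closure_induction'' generalizing i with
  | one => exact ⟨i, fun _ ↦ rfl⟩
  | mem _ hw =>
    obtain ⟨k, rfl⟩ := hw
    exact ⟨P.reflectionPerm k i, fun x ↦ P.coroot'_reflection x⟩
  | inv_mem _ hw =>
    obtain ⟨k, rfl⟩ := hw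
    exact ⟨P.reflectionPerm k i, fun x ↦ P.coroot'_reflection x⟩
  | mul a b _ _ iha ihb =>
    obtain ⟨j, hj⟩ := iha i
    obtain ⟨k, hk⟩ := ihb j
    exact ⟨k, fun x ↦ (hj (b x)).trans (hk x)⟩

lemma reflection_eq_of_root_eq_smul [CharZero K] [Finite ι] {t : K}
    (h : P.root j = t • P.root i) : P.reflection j = P.reflection i := by
  have : IsReflexive K N := .of_isPerfPair P.flip.toLinearMap
  have : IsAddTorsionFree N := .of_isTorsionFree K N
  have hcoroot : t • P.coroot j = P.coroot i := P.smul_coroot_eq_of_root_eq_smul i j t h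
  ext x
  simp only [RootPairing.reflection_apply, RootPairing.coroot', h, ← hcoroot, map_smul,
    LinearMap.smul_apply, smul_smul, smul_eq_mul, mul_comm t]

end Reflection

section Separates

variable [LinearOrder K]

/-- The hyperplane on which the `i`-th coroot vanishes strictly separates `x` from `y`. -/
def Separates (P : RootPairing ι K M N) (i : ι) (x y : M) : Prop :=
  P.coroot' i x * P.coroot' i y < 0

variable {P : RootPairing ι K M N} {i j : ι} {x y z : M}

lemma separates_reflection_iff :
    Separates P j (P.reflection i x) (P.reflection i y) ↔
      Separates P (P.reflectionPerm i j) x y := by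
  simp only [Separates, RootPairing.coroot'_reflection]

variable [IsStrictOrderedRing K]

lemma Separates.or_of_ne_zero (h : Separates P i x z) (hy : P.coroot' i y ≠ 0) :
    Separates P i x y ∨ Separates P i y z := by
  simp only [Separates, mul_neg_iff] at h ⊢
  grind

lemma separates_of_not_separates_reflection (hx : P.coroot' i x ≠ 0)
    (hy : P.coroot' i y ≠ 0) (h : ¬ Separates P i x (P.reflection i y)) : Separates P i x y := by
  rw [Separates, coroot'_reflection_self, mul_neg, neg_lt_zero, not_lt] at h
  exact lt_of_le_of_ne h (mul_ne_zero hx hy)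

end Separates

section Chamber

/-- The vector `p` is regular: it lies on no root hyperplane, hence in an open chamber. -/
def IsRegularVector (P : RootPairing ι K M N) (p : M) : Prop :=
  ∀ i, P.coroot' i p ≠ 0

variable {P : RootPairing ι K M N} {p v : M} {i : ι}

lemma IsRegularVector.apply (hp : IsRegularVector P p) {w : M ≃ₗ[K] M}
    (hw : w ∈ Subgroup.closure (range P.reflection)) : IsRegularVector P (w p) := fun i ↦ by
  obtain ⟨j, hj⟩ := exists_coroot'_comp_eq hw i
  exact hj p ▸ hp j

lemma exists_isRegularVector [CharZero K] [Finite ι] : ∃ p, IsRegularVector P p :=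
  Dual.exists_forall_ne_zero_of_forall_exists P.coroot' fun i ↦ ⟨P.root i, by simp⟩

variable [LinearOrder K]

/-- For regular `p`, the vector `v` lies in the closure of the chamber of `p`. -/
def InChamberClosure (P : RootPairing ι K M N) (p v : M) : Prop :=
  ∀ i, 0 ≤ P.coroot' i p * P.coroot' i v

/-- The hyperplane of the `i`-th root is a wall of the chamber of `p`: no other root hyperplane
separates `p` from its mirror image. Hyperplanes are compared through their reflections, so that
proportional roots are identified. -/
def IsWall (P : RootPairing ι K M N) (p : M) (i : ι) : Prop :=
  ∀ j, Separates P j p (P.reflection i p) → P.reflection j = P.reflection i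

/-- The reflections in the walls of the chamber of `p`. -/
def wallReflections (P : RootPairing ι K M N) (p : M) : Set (M ≃ₗ[K] M) :=
  P.reflection '' {i | IsWall P p i}

lemma InChamberClosure.apply (hv : InChamberClosure P p v) {w : M ≃ₗ[K] M}
    (hw : w ∈ Subgroup.closure (range P.reflection)) : InChamberClosure P (w p) (w v) := fun i ↦ by
  obtain ⟨j, hj⟩ := exists_coroot'_comp_eq hw i
  simpa only [hj] using hv j

variable [IsStrictOrderedRing K]

lemma InChamberClosure.coroot'_eq_zero_of_separates {q : M} (hp : InChamberClosure P p v)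
    (hq : InChamberClosure P q v) (h : Separates P i p q) : P.coroot' i v = 0 := by
  by_contra hv
  have hsq : 0 ≤ (P.coroot' i p * P.coroot' i q) * P.coroot' i v ^ 2 :=
    calc 0 ≤ (P.coroot' i p * P.coroot' i v) * (P.coroot' i q * P.coroot' i v) :=
          mul_nonneg (hp i) (hq i)
      _ = (P.coroot' i p * P.coroot' i q) * P.coroot' i v ^ 2 := by ring
  exact hsq.not_gt (mul_neg_of_neg_of_pos h (by positivity))

lemma exists_isRegularVector_inChamberClosure [Finite ι] (v : M) :
    ∃ p, IsRegularVector P p ∧ InChamberClosure P p v := by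
  obtain ⟨q, hq⟩ := exists_isRegularVector (P := P)
  have hlarge : ∀ᶠ c : K in Filter.atTop, ∀ i, P.coroot' i v ≠ 0 →
      0 < P.coroot' i (c • v + q) * P.coroot' i v := by
    refine Filter.eventually_all.mpr fun i ↦ ?_
    filter_upwards [Filter.eventually_gt_atTop (-(P.coroot' i q * P.coroot' i v) /
      P.coroot' i v ^ 2)] with c hc hv
    rw [div_lt_iff₀ (by positivity)] at hc
    simp only [map_add, map_smul, smul_eq_mul]
    linarith
  obtain ⟨c, hc⟩ := hlarge.exists
  refine ⟨c • v + q, fun i ↦ ?_, fun i ↦ ?_⟩ <;> by_cases hv : P.coroot' i v = 0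
  · simpa only [map_add, map_smul, hv, smul_zero, zero_add] using hq i
  · exact left_ne_zero_of_mul (hc i hv).ne'
  · simp [hv]
  · exact (hc i hv).le

end Chamber

section Generation

variable [LinearOrder K] [IsStrictOrderedRing K] {P : RootPairing ι K M N} {p : M} {i j : ι}

lemma coxeterWeight_lt_four [Finite ι] (h : P.reflection j ≠ P.reflection i) :
    P.coxeterWeight i j < 4 := by
  refine lt_of_le_of_ne ?_ fun hfour ↦ h ?_
  · simpa [← P.algebraMap_coxeterWeightIn K] using P.coxeterWeightIn_le_four K i j
  · rw [P.coxeterWeight_eq_four_iff_not_linearIndependent] at hfour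
    have hroot := P.pairing_smul_root_eq_of_not_linearIndependent hfour
    refine reflection_eq_of_root_eq_smul (t := P.pairing j i / 2) ?_
    rw [div_eq_inv_mul, mul_smul, hroot, inv_smul_smul₀ two_ne_zero]

lemma coxeterWeight_pos [Finite ι] (h : P.pairing i j ≠ 0) : 0 < P.coxeterWeight i j := by
  have := Fintype.ofFinite ι
  refine lt_of_le_of_ne ?_ (mul_ne_zero h (mt P.pairing_eq_zero_iff'.mp h)).symm
  simpa [← P.algebraMap_coxeterWeightIn K] using P.coxeterWeight_nonneg (P.posRootForm K) i j

-- The hyperplane of `j` found here weakly separates `p` from its projection to that of `i`.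
lemma exists_two_mul_sq_le_of_not_isWall (hi : ¬ IsWall P p i) :
    ∃ j, P.reflection j ≠ P.reflection i ∧ P.coroot' j p ≠ 0 ∧
      2 * P.coroot' j p ^ 2 ≤ P.coroot' i p * P.pairing i j * P.coroot' j p := by
  simp only [IsWall, not_forall] at hi
  obtain ⟨j, hsep, hne⟩ := hi
  set k := P.reflectionPerm i j with hk
  have hpk : P.coroot' k p = P.coroot' j p - P.coroot' i p * P.pairing i j := by
    rw [← P.coroot'_reflection, coroot'_reflection_eq_sub]
  have hpairing : P.pairing i k = -P.pairing i j := by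
    rw [P.pairing_reflectionPerm, P.pairing_reflectionPerm_self_left]
  have hnek : P.reflection k ≠ P.reflection i := fun h ↦ hne <| by
    rw [← P.reflectionPerm_self i j, ← hk, P.reflection_reflectionPerm, h, reflection_mul_self,
      one_mul]
  rw [Separates, P.coroot'_reflection, ← hk] at hsep
  have hjk := mul_ne_zero_iff.mp hsep.ne
  rcases le_or_gt (P.coroot' j p * (P.coroot' j p + P.coroot' k p)) 0 with h | h
  · exact ⟨j, hne, hjk.1, by linear_combination h - P.coroot' j p * hpk⟩
  · refine ⟨k, hnek, hjk.2, ?_⟩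
    have h' : P.coroot' k p * (P.coroot' j p + P.coroot' k p) ≤ 0 := by
      by_contra! hpos
      linarith [mul_pos h hpos,
        mul_nonpos_of_nonpos_of_nonneg hsep.le (sq_nonneg (P.coroot' j p + P.coroot' k p))]
    rw [hpairing]
    linear_combination h' + P.coroot' k p * hpk

section normalizedHeightSq

variable [Fintype ι]

/-- The squared height of the `i`-th coroot with respect to `p`, normalised by the length of the
root so that proportional roots have equal height. -/
def normalizedHeightSq (P : RootPairing ι K M N) (p : M) (i : ι) : K :=
  P.coroot' i p ^ 2 * P.RootForm (P.root i) (P.root i)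

lemma rootForm_root_self_pos : 0 < P.RootForm (P.root i) (P.root i) := by
  rw [P.rootForm_root_self]
  exact Finset.sum_pos' (fun j _ ↦ mul_self_nonneg _) ⟨i, Finset.mem_univ i, by simp⟩

lemma pairing_mul_rootForm_root_self_swap :
    P.pairing i j * P.RootForm (P.root j) (P.root j) =
      P.pairing j i * P.RootForm (P.root i) (P.root i) :=
  ((P.posRootForm K).toInvariantForm.pairing_mul_eq_pairing_mul_swap i j).symm

lemma normalizedHeightSq_lt (hne : P.reflection j ≠ P.reflection i) (hi : P.coroot' i p ≠ 0)
    (h : 2 * P.coroot' j p ^ 2 ≤ P.coroot' i p * P.pairing i j * P.coroot' j p) :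
    normalizedHeightSq P p j < normalizedHeightSq P p i := by
  rw [normalizedHeightSq, normalizedHeightSq]
  set A := P.RootForm (P.root i) (P.root i)
  set B := P.RootForm (P.root j) (P.root j)
  set x := P.coroot' i p
  set y := P.coroot' j p
  have hA : 0 < A := rootForm_root_self_pos
  have hB : 0 < B := rootForm_root_self_pos
  have hswap : P.pairing i j * B = P.pairing j i * A := pairing_mul_rootForm_root_self_swap
  have hweight : P.coxeterWeight i j < 4 := coxeterWeight_lt_four hne
  have hsq : 4 * y ^ 2 ≤ P.pairing i j ^ 2 * x ^ 2 := by
    linarith [sq_nonneg (P.pairing i j * x - 2 * y)]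
  have hlt : 4 * (y ^ 2 * B) < 4 * (x ^ 2 * A) :=
    calc 4 * (y ^ 2 * B) = 4 * y ^ 2 * B := by ring
      _ ≤ P.pairing i j ^ 2 * x ^ 2 * B := by gcongr
      _ = P.coxeterWeight i j * (x ^ 2 * A) := by
        rw [RootPairing.coxeterWeight]
        linear_combination P.pairing i j * x ^ 2 * hswap
      _ < 4 * (x ^ 2 * A) := by gcongr
  linarith

lemma normalizedHeightSq_reflectionPerm_lt (hne : P.reflection j ≠ P.reflection i)
    (hj : P.coroot' j p ≠ 0)
    (h : 2 * P.coroot' j p ^ 2 ≤ P.coroot' i p * P.pairing i j * P.coroot' j p) :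
    normalizedHeightSq P p (P.reflectionPerm j i) < normalizedHeightSq P p i := by
  simp only [normalizedHeightSq, P.root_reflectionPerm, P.rootForm_reflection_reflection_apply,
    ← P.coroot'_reflection, coroot'_reflection_eq_sub]
  refine mul_lt_mul_of_pos_right ?_ rootForm_root_self_pos
  set x := P.coroot' i p
  set y := P.coroot' j p
  set a := P.pairing i j
  set b := P.pairing j i
  have hy : 0 < y ^ 2 := by positivity
  have ha : a ≠ 0 := by
    intro ha
    rw [ha] at h
    linarith
  have hab : 0 < a * b := coxeterWeight_pos ha
  have hlt : a * b * y ^ 2 < 2 * (x * a * y) :=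
    calc a * b * y ^ 2 < 4 * y ^ 2 := by
          gcongr
          exact coxeterWeight_lt_four hne
      _ ≤ 2 * (x * a * y) := by linarith
  have hlt' : a ^ 2 * (y * b) ^ 2 < a ^ 2 * (2 * x * (y * b)) :=
    calc a ^ 2 * (y * b) ^ 2 = a * b * (a * b * y ^ 2) := by ring
      _ < a * b * (2 * (x * a * y)) := by gcongr
      _ = a ^ 2 * (2 * x * (y * b)) := by ring
  linarith [lt_of_mul_lt_mul_left hlt' (sq_nonneg a)]

end normalizedHeightSq

theorem reflection_mem_closure_wallReflections [Finite ι] (hp : IsRegularVector P p) (i : ι) :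
    P.reflection i ∈ Subgroup.closure (wallReflections P p) := by
  have := Fintype.ofFinite ι
  induction i using (Finite.wellFounded_of_trans_of_irrefl
    (InvImage (· < ·) (normalizedHeightSq P p))).induction with
  | _ i ih =>
  by_cases hi : IsWall P p i
  · exact Subgroup.subset_closure ⟨i, hi, rfl⟩
  obtain ⟨j, hne, hj, hle⟩ := exists_two_mul_sq_le_of_not_isWall hi
  have hmem_j := ih j (normalizedHeightSq_lt hne (hp i) hle)
  have hmem := ih (P.reflectionPerm j i) (normalizedHeightSq_reflectionPerm_lt hne hj hle)
  rw [← P.reflectionPerm_self j i, P.reflection_reflectionPerm]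
  exact mul_mem (mul_mem hmem_j hmem) hmem_j

lemma exists_list_wallReflections_prod_eq [Finite ι] (hp : IsRegularVector P p) {w : M ≃ₗ[K] M}
    (hw : w ∈ Subgroup.closure (range P.reflection)) :
    ∃ l : List (M ≃ₗ[K] M), (∀ g ∈ l, g ∈ wallReflections P p) ∧ l.prod = w := by
  have hinv : (wallReflections P p)⁻¹ ⊆ wallReflections P p := by
    rintro g ⟨i, hi, hg⟩
    exact ⟨i, hi, by rw [← P.reflection_inv, hg, inv_inv]⟩
  have hle : Subgroup.closure (range P.reflection) ≤ Subgroup.closure (wallReflections P p) :=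
    (Subgroup.closure_le _).mpr (range_subset_iff.mpr (reflection_mem_closure_wallReflections hp))
  have hmem : w ∈ (Subgroup.closure (wallReflections P p)).toSubmonoid := hle hw
  rw [Subgroup.closure_toSubmonoid, union_eq_left.mpr hinv] at hmem
  exact Submonoid.exists_list_of_mem_closure hmem

end Generation

section Words

variable [LinearOrder K] {P : RootPairing ι K M N} {p v : M} {j : ι} {l : List (M ≃ₗ[K] M)}

lemma prod_wallReflections_mem_closure_range (hl : ∀ g ∈ l, g ∈ wallReflections P p) :
    l.prod ∈ Subgroup.closure (range P.reflection) :=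
  list_prod_mem fun g hg ↦ Subgroup.subset_closure (image_subset_range _ _ (hl g hg))

variable [IsStrictOrderedRing K]

theorem exists_list_prod_eq_reflection_mul_of_separates (hp : IsRegularVector P p)
    (hl : ∀ g ∈ l, g ∈ wallReflections P p) (hsep : Separates P j p (l.prod p)) :
    ∃ l' : List (M ≃ₗ[K] M), (∀ g ∈ l', g ∈ wallReflections P p) ∧ l'.length < l.length ∧
      l'.prod = P.reflection j * l.prod := by
  induction l generalizing j with
  | nil => exact absurd hsep (mul_self_nonneg _).not_gt
  | cons s u ih =>
    obtain ⟨⟨i, hwall, rfl⟩, hu⟩ := List.forall_mem_cons.mp hl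
    rw [List.prod_cons, LinearEquiv.mul_apply] at hsep
    have hregular : P.coroot' j (P.reflection i p) ≠ 0 := P.coroot'_reflection p ▸ hp _
    rcases hsep.or_of_ne_zero hregular with hsep | hsep
    · refine ⟨u, hu, u.length.lt_succ_self, ?_⟩
      rw [List.prod_cons, hwall j hsep, ← mul_assoc, reflection_mul_self, one_mul]
    · obtain ⟨u', hu', hlen, hprod⟩ := ih hu (separates_reflection_iff.mp hsep)
      refine ⟨P.reflection i :: u', List.forall_mem_cons.mpr ⟨⟨i, hwall, rfl⟩, hu'⟩,
        Nat.succ_lt_succ hlen, ?_⟩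
      rw [List.prod_cons, List.prod_cons, hprod, P.reflection_reflectionPerm]
      simp only [← mul_assoc, reflection_mul_self, one_mul]

theorem prod_mem_closure_fixing_of_apply_eq (hp : IsRegularVector P p)
    (hv : InChamberClosure P p v) (hl : ∀ g ∈ l, g ∈ wallReflections P p) (hfix : l.prod v = v) :
    l.prod ∈ Subgroup.closure (P.reflection '' {i | P.coroot' i v = 0}) := by
  induction hn : l.length using Nat.strong_induction_on generalizing l with
  | _ n ih =>
  subst hn
  match l with
  | [] => exact one_mem _
  | s :: u =>
    obtain ⟨⟨i, -, rfl⟩, hu⟩ := List.forall_mem_cons.mp hl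
    have hclosure : InChamberClosure P ((P.reflection i :: u).prod p) v := by
      simpa only [hfix] using hv.apply (prod_wallReflections_mem_closure_range hl)
    by_cases hsep : Separates P i p ((P.reflection i :: u).prod p)
    · have hzero : P.coroot' i v = 0 := hv.coroot'_eq_zero_of_separates hclosure hsep
      have hufix : u.prod v = v := (P.reflection i).injective <| by
        rw [reflection_apply_eq_self hzero, ← LinearEquiv.mul_apply, ← List.prod_cons, hfix]
      rw [List.prod_cons]
      exact mul_mem (Subgroup.subset_closure ⟨i, hzero, rfl⟩)
        (ih _ u.length.lt_succ_self hu hufix rfl)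
    · have hregular : IsRegularVector P (u.prod p) :=
        hp.apply (prod_wallReflections_mem_closure_range hu)
      have hsep' : Separates P i p (u.prod p) :=
        separates_of_not_separates_reflection (hp i) (hregular i) hsep
      obtain ⟨u', hu', hlen, hprod⟩ := exists_list_prod_eq_reflection_mul_of_separates hp hu hsep'
      rw [List.prod_cons, ← hprod] at hfix ⊢
      exact ih _ (hlen.trans u.length.lt_succ_self) hu' hfix rfl

end Words

theorem closure_range_reflection_inf_stabilizer [LinearOrder K] [IsStrictOrderedRing K] [Finite ι]
    (P : RootPairing ι K M N) (v : M) :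
    Subgroup.closure (range P.reflection) ⊓ MulAction.stabilizer (M ≃ₗ[K] M) v =
      Subgroup.closure (P.reflection '' {i | P.coroot' i v = 0}) := by
  refine le_antisymm ?_ ((Subgroup.closure_le _).mpr ?_)
  · rintro w ⟨hw, hfix⟩
    obtain ⟨p, hp, hv⟩ := exists_isRegularVector_inChamberClosure (P := P) v
    obtain ⟨l, hl, rfl⟩ := exists_list_wallReflections_prod_eq hp hw
    exact prod_mem_closure_fixing_of_apply_eq hp hv hl hfix
  · rintro _ ⟨i, hi, rfl⟩
    exact ⟨Subgroup.subset_closure (mem_range_self i), reflection_apply_eq_self hi⟩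

end RootPairing

theorem exists_rootPairing_of_image_reflection_eq {K V : Type*} [Field K] [CharZero K]
    [AddCommGroup V] [Module K V] {Φ : Set V} (hfin : Φ.Finite)
    (hspan : Submodule.span K Φ = ⊤) {coroot : V → Dual K V} (hcoroot : ∀ α ∈ Φ, coroot α α = 2)
    {s : V → V ≃ₗ[K] V} (hs : ∀ α ∈ Φ, ∀ x, s α x = x - coroot α x • α)
    (hmaps : ∀ α ∈ Φ, s α '' Φ = Φ) :
    ∃ P : RootPairing Φ K V (Dual K V),
      ∀ α : Φ, P.reflection α = s α ∧ P.coroot' α = coroot α := by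
  have : Module.Finite K V := ⟨hfin.toFinset, by rwa [hfin.coe_toFinset]⟩
  have : IsAddTorsionFree V := .of_isTorsionFree K V
  have : Finite Φ := hfin
  have hmapsTo : ∀ α ∈ Φ, MapsTo (preReflection α (coroot α)) Φ Φ := fun α hα x hx ↦ by
    rw [preReflection_apply, ← hs α hα]
    exact (hmaps α hα).subset (mem_image_of_mem _ hx)
  have hinj : Function.Injective fun α : Φ ↦ coroot α := fun α β (h : coroot α = coroot β) ↦
    Subtype.ext <| eq_of_mapsTo_reflection_of_mem hfin (hcoroot α α.2) (hcoroot β β.2)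
      (h ▸ hcoroot α α.2) (h ▸ hcoroot β β.2) (hmapsTo α α.2) (hmapsTo β β.2) β.2
  let P : RootPairing Φ K V (Dual K V) :=
    .mk'' (Dual.eval K V) (.subtype _) ⟨fun α ↦ coroot α, hinj⟩ (fun α ↦ hcoroot α α.2)
      (fun α ↦ by simpa using! hmapsTo α α.2) (by simpa using hspan)
  exact ⟨P, fun α ↦ ⟨LinearEquiv.ext fun x ↦ (hs α α.2 x).symm, rfl⟩⟩

theorem stabilizer_eq_closure_fixing_reflections_general {K V : Type*} [Field K] [LinearOrder K]
    [IsStrictOrderedRing K] [AddCommGroup V] [Module K V] {Φ : Set V} (hfin : Φ.Finite)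
    (hspan : Submodule.span K Φ = ⊤) {coroot : V → Dual K V} (hcoroot : ∀ α ∈ Φ, coroot α α = 2)
    {s : V → V ≃ₗ[K] V} (hs : ∀ α ∈ Φ, ∀ x, s α x = x - coroot α x • α)
    (hmaps : ∀ α ∈ Φ, s α '' Φ = Φ) (v : V) :
    Subgroup.closure (s '' Φ) ⊓ MulAction.stabilizer (V ≃ₗ[K] V) v =
      Subgroup.closure (s '' {α ∈ Φ | coroot α v = 0}) := by
  have : Finite Φ := hfin
  obtain ⟨P, hP⟩ := exists_rootPairing_of_image_reflection_eq hfin hspan hcoroot hs hmaps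
  have hrange : range P.reflection = s '' Φ := by
    ext; simp [hP]
  have hfixing : P.reflection '' {α | P.coroot' α v = 0} = s '' {α ∈ Φ | coroot α v = 0} := by
    ext; simp [hP, and_assoc, and_left_comm]
  rw [← hrange, ← hfixing, closure_range_reflection_inf_stabilizer]

/- STATEMENT 7: For every vector `v ∈ V`, the stabilizer `{w ∈ W | w v = v}` of `v` in
the Weyl group `W` is equal to the subgroup of `W` generated by the reflections `s_α`
for those roots `α ∈ Φ` satisfying `α^∨(v) = 0` (equivalently, those reflections `s_α`
fixing `v`). -/
theorem stabilizer_eq_closure_fixing_reflections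
    (V : Type*) [AddCommGroup V] [Module ℝ V] [FiniteDimensional ℝ V]
    (Φ : Set V) (hfin : Φ.Finite) (h0 : (0 : V) ∉ Φ)
    (hspan : Submodule.span ℝ Φ = ⊤)
    (coroot : V → Module.Dual ℝ V)
    (hcoroot : ∀ α ∈ Φ, coroot α α = 2)
    (s : V → (V ≃ₗ[ℝ] V))
    (hs : ∀ α ∈ Φ, ∀ x : V, s α x = x - coroot α x • α)
    (hmaps : ∀ α ∈ Φ, ⇑(s α) '' Φ = Φ)
    (hred : ∀ α ∈ Φ, ∀ t : ℝ, t • α ∈ Φ → t = 1 ∨ t = -1)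
    (W : Subgroup (V ≃ₗ[ℝ] V)) (hW : W = Subgroup.closure (s '' Φ)) :
    ∀ v : V, {w : V ≃ₗ[ℝ] V | w ∈ W ∧ w v = v} =
      (Subgroup.closure (s '' {α ∈ Φ | coroot α v = 0}) : Subgroup (V ≃ₗ[ℝ] V)) := by
  intro v
  subst hW
  exact congrArg SetLike.coe
    (stabilizer_eq_closure_fixing_reflections_general hfin hspan hcoroot hs hmaps v)
end

section
/- The following hold: (i) R ⊆ R'; (ii) R^0 := W^0 ∩ R' is a normal subgroup of R'; (iii) every element of R' factors uniquely as u·v with u ∈ R^0 and v ∈ R, so that R' is the semidirect product of R^0 by R; and (iv) W^{0'} is a normal subgroup of W^0 and the composite of the inclusion R^0 ↪ W^0 with the quotient map W^0 → W^0/W^{0'} is an isomorphism of groups R^0 ≅ W^0/W^{0'}. -/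
/-!
For a reflection-stable set of roots `Ψ`, the group `W(Ψ)` acts simply transitively on the positive
systems of `Ψ`. Freeness is the exchange argument on words in the simple reflections, transitivity
is descent on the number of inversions. If `Ψ ⊆ Φ⁰` is stable under `Γ`, every `g ∈ Γ` permutes the
positive systems of `Ψ`, so some `g * w` with `w ∈ W(Ψ)` preserves the chosen one: `W(Ψ)` and the
stabilizer of the positive system are complements in `Γ`. With `Ψ = Φ⁰` this factors the elements
of `R'`, and with `Ψ = Φ⁰'` it picks the representatives in `R⁰` of the cosets of `W⁰'` in `W⁰`.

The simple roots are an irredundant set of generators of the cone of positive roots, hence span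
extreme rays of it; that `coroot α β` and `coroot β α` are positive together comes from the
invariant form `∑ γ, coroot γ ⊗ coroot γ`.
-/

open Module Set MulAction
open scoped Pointwise

section Group

variable {G : Type*} [Group G]

theorem exists_mem_pow_of_mem_closure {S : Set G}
    (hS : ∀ x ∈ S, x⁻¹ ∈ S) {w : G} (hw : w ∈ Subgroup.closure S) : ∃ n : ℕ, w ∈ S ^ n := by
  induction hw using Subgroup.closure_induction_right with
  | one => exact ⟨0, by simp⟩
  | mul_right x _ y hy ih =>
    obtain ⟨n, hn⟩ := ih
    exact ⟨n + 1, pow_succ S n ▸ mul_mem_mul hn hy⟩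
  | mul_inv_cancel x _ y hy ih =>
    obtain ⟨n, hn⟩ := ih
    exact ⟨n + 1, pow_succ S n ▸ mul_mem_mul hn (hS y hy)⟩

theorem pow_subset_closure {S : Set G} (n : ℕ) :
    S ^ n ⊆ Subgroup.closure S := by
  induction n with
  | zero => simp
  | succ n ih =>
    rw [pow_succ]
    rintro _ ⟨u, hu, x, hx, rfl⟩
    exact mul_mem (ih hu) (Subgroup.subset_closure hx)

theorem existsUnique_mul_eq_of_disjoint {H N L : Subgroup G} (hNL : N ≤ L) (hHN : Disjoint H N)
    {g : G} (hg : g ∈ L) (hex : ∃ w ∈ H, g⁻¹ * w ∈ N) :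
    ∃! p : G × G, p.1 ∈ H ⊓ L ∧ p.2 ∈ N ∧ g = p.1 * p.2 := by
  obtain ⟨w, hw, hgw⟩ := hex
  have hwL : w ∈ L := (L.mul_mem_cancel_left (inv_mem hg)).mp (hNL hgw)
  refine ⟨(w, w⁻¹ * g), ⟨⟨hw, hwL⟩, by simpa using inv_mem hgw, (mul_inv_cancel_left w g).symm⟩, ?_⟩
  rintro ⟨u, v⟩ ⟨⟨hu, -⟩, hv, rfl⟩
  have hfst : w⁻¹ * u = 1 := by
    refine Subgroup.disjoint_def.mp hHN (mul_mem (inv_mem hw) hu) ?_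
    simpa [mul_assoc] using mul_mem (inv_mem hgw) (inv_mem hv)
  rw [inv_mul_eq_one] at hfst
  simp [hfst]

theorem existsUnique_inv_mul_mem_of_disjoint {H N L : Subgroup G} (hNH : N ≤ H)
    (hNL : Disjoint N L) {w : G} (hw : w ∈ H) (hex : ∃ u ∈ N, w * u ∈ L) :
    ∃! r, r ∈ H ⊓ L ∧ w⁻¹ * r ∈ N := by
  obtain ⟨u, hu, hwu⟩ := hex
  refine ⟨w * u, ⟨⟨mul_mem hw (hNH hu), hwu⟩, by simpa using hu⟩, ?_⟩
  rintro r ⟨⟨-, hrL⟩, hwr⟩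
  have hone : (w * u)⁻¹ * r = 1 := by
    refine Subgroup.disjoint_def.mp hNL ?_ (mul_mem (inv_mem hwu) hrL)
    simpa [mul_assoc] using mul_mem (inv_mem hu) hwr
  exact (inv_mul_eq_one.mp hone).symm

end Group

section Cone

theorem exists_irredundant_subset_span {R M : Type*} [Semiring R] [AddCommMonoid M] [Module R M]
    {P : Set M} (hP : P.Finite) :
    ∃ D ⊆ P, P ⊆ Submodule.span R D ∧ ∀ d ∈ D, d ∉ Submodule.span R (D \ {d}) := by
  have hfin : {D : Set M | D ⊆ P ∧ P ⊆ Submodule.span R D}.Finite :=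
    hP.finite_subsets.subset fun D hD => hD.1
  obtain ⟨D, ⟨hDP, hPD⟩, hmin⟩ := hfin.exists_minimal ⟨P, Subset.rfl, Submodule.subset_span⟩
  refine ⟨D, hDP, hPD, fun d hd hmem => ?_⟩
  have hspan : Submodule.span R (D \ {d}) = Submodule.span R D := by
    rw [← Submodule.span_insert_eq_span hmem, insert_sdiff_self_of_mem hd]
  have hPD' : P ⊆ Submodule.span R (D \ {d}) := by rwa [hspan]
  exact (hmin ⟨sdiff_subset.trans hDP, hPD'⟩ sdiff_subset hd).2 rfl

variable {K V : Type*} [Field K] [LinearOrder K] [IsStrictOrderedRing K]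
  [AddCommGroup V] [Module K V] {D : Set V} {φ : Dual K V} {x y : V}

theorem exists_pos_of_mem_hull (hx : x ∈ PointedCone.hull K D) (hφ : 0 < φ x) :
    ∃ d ∈ D, 0 < φ d := by
  by_contra! hD
  have hle : PointedCone.hull K D ≤ (PointedCone.positive K K).comap (-φ) :=
    Submodule.span_le.mpr fun d hd => by simpa using hD d hd
  exact hφ.not_ge (by simpa using hle hx)

theorem eq_zero_or_pos_of_mem_hull (hD : ∀ d ∈ D, 0 < φ d) (hx : x ∈ PointedCone.hull K D) :
    x = 0 ∨ 0 < φ x := by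
  induction hx using Submodule.span_induction with
  | mem d hd => exact .inr (hD d hd)
  | zero => exact .inl rfl
  | add u v _ _ hu hv =>
    rcases hu with rfl | hu
    · simpa using hv
    · rcases hv with rfl | hv
      · simpa using .inr hu
      · exact .inr (by simpa using add_pos hu hv)
  | smul a u _ hu =>
    rcases hu with rfl | hu
    · simp
    · rcases a.2.eq_or_lt with ha | ha
      · exact .inl (by rw [← Nonneg.coe_smul, ← ha, zero_smul])
      · exact .inr (by simpa [← Nonneg.coe_smul] using mul_pos ha hu)

theorem nonneg_of_mem_hull (hD : ∀ d ∈ D, 0 < φ d) (hx : x ∈ PointedCone.hull K D) :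
    0 ≤ φ x := by
  rcases eq_zero_or_pos_of_mem_hull hD hx with rfl | hpos
  · simp
  · exact hpos.le

theorem exists_eq_smul_add_of_mem_hull {d : V} (hd : d ∈ D) (hx : x ∈ PointedCone.hull K D) :
    ∃ a : K, ∃ z ∈ PointedCone.hull K (D \ {d}), x = a • d + z := by
  rw [← insert_sdiff_self_of_mem hd, PointedCone.hull, Submodule.mem_span_insert] at hx
  obtain ⟨a, z, hz, rfl⟩ := hx
  exact ⟨a, z, hz, rfl⟩

theorem mem_span_singleton_of_add_eq_smul (hD : ∀ d ∈ D, 0 < φ d) {d : V} (hd : d ∈ D)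
    (hirr : d ∉ PointedCone.hull K (D \ {d})) (hx : x ∈ PointedCone.hull K D)
    (hy : y ∈ PointedCone.hull K D) {c : K} (hxy : x + y = c • d) : x ∈ K ∙ d := by
  obtain ⟨a, u, hu, rfl⟩ := exists_eq_smul_add_of_mem_hull hd hx
  obtain ⟨b, v, hv, rfl⟩ := exists_eq_smul_add_of_mem_hull hd hy
  have huv : u + v = (c - a - b) • d := by
    rw [sub_smul, sub_smul, ← hxy]
    abel
  have hcoeff : c - a - b ≤ 0 := by
    by_contra! hpos
    have hmem := PointedCone.smul_mem _ (inv_pos.mpr hpos).le (add_mem hu hv)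
    rw [huv, inv_smul_smul₀ hpos.ne'] at hmem
    exact hirr hmem
  have hD' : ∀ e ∈ D \ {d}, 0 < φ e := fun e he => hD e he.1
  have hφuv : φ u + φ v ≤ 0 := by
    rw [← map_add, huv, map_smul]
    exact mul_nonpos_of_nonpos_of_nonneg hcoeff (hD d hd).le
  rcases eq_zero_or_pos_of_mem_hull hD' hu with rfl | hφu
  · simpa using Submodule.smul_mem _ a (Submodule.mem_span_singleton_self d)
  · linarith [nonneg_of_mem_hull hD' hv]

end Cone

section RootSystem

variable {K V : Type*} [Field K] [AddCommGroup V] [Module K V]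

/-- `Φ` is a finite, not necessarily reduced or crystallographic, root system spanning `V`. The
coroot and the reflection of a root are given by functions on all of `V`, whose values off `Φ` are
irrelevant. -/
structure IsRootSystem (Φ : Set V) (coroot : V → Dual K V) (s : V → V ≃ₗ[K] V) : Prop where
  finite : Φ.Finite
  span_eq_top : Submodule.span K Φ = ⊤
  coroot_self : ∀ α ∈ Φ, coroot α α = 2
  reflection_apply : ∀ α ∈ Φ, ∀ x, s α x = x - coroot α x • α
  image_reflection : ∀ α ∈ Φ, s α '' Φ = Φ

/-- The sum of the squares of the coroots, a symmetric bilinear form invariant under the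
automorphisms of the root system `Φ`. -/
noncomputable def corootForm {Φ : Set V} (hΦ : Φ.Finite) (coroot : V → Dual K V) :
    LinearMap.BilinForm K V :=
  ∑ γ ∈ hΦ.toFinset, (coroot γ).smulRight (coroot γ)

theorem corootForm_apply {Φ : Set V} (hΦ : Φ.Finite) (coroot : V → Dual K V) (x y : V) :
    corootForm hΦ coroot x y = ∑ γ ∈ hΦ.toFinset, coroot γ x * coroot γ y := by
  simp [corootForm]

namespace IsRootSystem

variable {Φ : Set V} {coroot : V → Dual K V} {s : V → V ≃ₗ[K] V} {α β : V} {g : V ≃ₗ[K] V}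

theorem reflection_self (h : IsRootSystem Φ coroot s) (hα : α ∈ Φ) : s α α = -α := by
  rw [h.reflection_apply α hα, h.coroot_self α hα]
  module

theorem reflection_mul_self (h : IsRootSystem Φ coroot s) (hα : α ∈ Φ) : s α * s α = 1 := by
  ext x
  simp only [LinearEquiv.mul_apply, LinearEquiv.coe_one, id_eq]
  rw [h.reflection_apply α hα x, map_sub, map_smul, h.reflection_self hα,
    h.reflection_apply α hα x]
  module

theorem reflection_inv (h : IsRootSystem Φ coroot s) (hα : α ∈ Φ) : (s α)⁻¹ = s α :=
  inv_eq_of_mul_eq_one_left (h.reflection_mul_self hα)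

theorem mul_reflection_inv_apply (h : IsRootSystem Φ coroot s) (hα : α ∈ Φ) (x : V) :
    (g * s α)⁻¹ x = s α (g⁻¹ x) := by
  rw [mul_inv_rev, h.reflection_inv hα, LinearEquiv.mul_apply]

section CharZero

variable [CharZero K]

theorem ne_zero (h : IsRootSystem Φ coroot s) (hα : α ∈ Φ) : α ≠ 0 := by
  rintro rfl
  simpa using h.coroot_self 0 hα

theorem coroot_eq (h : IsRootSystem Φ coroot s) (hα : α ∈ Φ) {φ : Dual K V} (hφ : φ α = 2)
    (hmaps : MapsTo (preReflection α φ) Φ Φ) : coroot α = φ := by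
  refine Dual.eq_of_preReflection_mapsTo h.finite h.span_eq_top (h.coroot_self α hα) ?_ hφ hmaps
  intro x hx
  rw [preReflection_apply, ← h.reflection_apply α hα]
  exact (h.image_reflection α hα).subset (mem_image_of_mem _ hx)

theorem coroot_map (h : IsRootSystem Φ coroot s) (hg : g '' Φ = Φ) (hα : α ∈ Φ) (x : V) :
    coroot (g α) (g x) = coroot α x := by
  have hmem : ∀ {y}, y ∈ Φ → g y ∈ Φ := fun hy => hg.subset (mem_image_of_mem g hy)
  have hcoroot : coroot (g α) = coroot α ∘ₗ g.symm.toLinearMap := by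
    refine h.coroot_eq (hmem hα) (by simp [h.coroot_self α hα]) fun y hy => ?_
    obtain ⟨z, hz, rfl⟩ := hg.superset hy
    have hs := hmem ((h.image_reflection α hα).subset (mem_image_of_mem _ hz))
    simpa [preReflection_apply, h.reflection_apply α hα] using hs
  simp [hcoroot]

theorem reflection_map (h : IsRootSystem Φ coroot s) (hg : g '' Φ = Φ) (hα : α ∈ Φ) :
    s (g α) = g * s α * g⁻¹ := by
  rw [eq_mul_inv_iff_mul_eq]
  ext x
  simp only [LinearEquiv.mul_apply]
  rw [h.reflection_apply _ (hg.subset (mem_image_of_mem g hα)), h.coroot_map hg hα,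
    h.reflection_apply α hα, map_sub, map_smul]

theorem reflection_eq_of_mem_span (h : IsRootSystem Φ coroot s) (hα : α ∈ Φ) (hβ : β ∈ Φ)
    (hβα : β ∈ K ∙ α) : s β = s α := by
  obtain ⟨t, rfl⟩ := Submodule.mem_span_singleton.mp hβα
  have ht : t ≠ 0 := by
    rintro rfl
    exact h.ne_zero hβ (zero_smul K α)
  have hscale (x : V) : (t⁻¹ • coroot α) x • t • α = coroot α x • α := by
    rw [LinearMap.smul_apply, smul_eq_mul, smul_smul, mul_right_comm, inv_mul_cancel₀ ht, one_mul]
  have hcoroot : coroot (t • α) = t⁻¹ • coroot α := by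
    refine h.coroot_eq hβ (by simp [h.coroot_self α hα, ht]) fun x hx => ?_
    rw [preReflection_apply, hscale, ← h.reflection_apply α hα]
    exact (h.image_reflection α hα).subset (mem_image_of_mem _ hx)
  ext x
  rw [h.reflection_apply _ hβ, h.reflection_apply α hα, hcoroot, hscale]

theorem corootForm_map (h : IsRootSystem Φ coroot s) (hg : g '' Φ = Φ) (x y : V) :
    corootForm h.finite coroot (g x) (g y) = corootForm h.finite coroot x y := by
  simp only [corootForm_apply]
  symm
  refine Finset.sum_nbij g (fun γ hγ => ?_) g.injective.injOn ?_ fun γ hγ => ?_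
  · rw [Finite.mem_toFinset] at hγ ⊢
    exact hg.subset (mem_image_of_mem g hγ)
  · rw [Finite.coe_toFinset]
    exact hg.superset
  · rw [Finite.mem_toFinset] at hγ
    rw [h.coroot_map hg hγ, h.coroot_map hg hγ]

end CharZero

variable [LinearOrder K] [IsStrictOrderedRing K]

theorem corootForm_self_pos (h : IsRootSystem Φ coroot s) (hα : α ∈ Φ) :
    0 < corootForm h.finite coroot α α := by
  rw [corootForm_apply]
  refine Finset.sum_pos' (fun γ _ => mul_self_nonneg _) ⟨α, h.finite.mem_toFinset.mpr hα, ?_⟩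
  norm_num [h.coroot_self α hα]

theorem coroot_mul_corootForm_self (h : IsRootSystem Φ coroot s) (hα : α ∈ Φ) (x : V) :
    coroot α x * corootForm h.finite coroot α α = 2 * corootForm h.finite coroot x α := by
  have hinv := h.corootForm_map (h.image_reflection α hα) x α
  rw [h.reflection_self hα, h.reflection_apply α hα] at hinv
  simp only [map_neg, map_sub, map_smul, LinearMap.sub_apply, LinearMap.smul_apply,
    smul_eq_mul] at hinv
  linarith

theorem coroot_pos_iff (h : IsRootSystem Φ coroot s) (hα : α ∈ Φ) (x : V) :
    0 < coroot α x ↔ 0 < corootForm h.finite coroot x α := by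
  rw [← mul_pos_iff_of_pos_right (h.corootForm_self_pos hα), h.coroot_mul_corootForm_self hα,
    mul_pos_iff_of_pos_left two_pos]

theorem coroot_pos_comm (h : IsRootSystem Φ coroot s) (hα : α ∈ Φ) (hβ : β ∈ Φ) :
    0 < coroot α β ↔ 0 < coroot β α := by
  rw [h.coroot_pos_iff hα, h.coroot_pos_iff hβ]
  simp only [corootForm_apply, mul_comm]

end IsRootSystem

/-- The roots of `Ψ` that are positive with respect to the functional `f`. -/
def posRoots [LinearOrder K] (f : Dual K V) (Ψ : Set V) : Set V := {α ∈ Ψ | 0 < f α}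

/-- The roots of `Ψ` that are positive for `h` and lie in the image under `w` of the negative roots
for `f`; it is empty when `w` carries the positive system of `f` to that of `h`. -/
def inversions [LinearOrder K] (f h : Dual K V) (Ψ : Set V) (w : V ≃ₗ[K] V) : Set V :=
  {β ∈ posRoots h Ψ | f (w⁻¹ β) < 0}

theorem image_posRoots_eq [LinearOrder K] {f : Dual K V} {Ψ : Set V} {g : V ≃ₗ[K] V}
    (hΨ : Ψ.Finite) (hg : g '' Ψ = Ψ) (hpos : ∀ α ∈ posRoots f Ψ, 0 < f (g α)) :
    g '' posRoots f Ψ = posRoots f Ψ := by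
  have hfin : (posRoots f Ψ).Finite := hΨ.subset (sep_subset _ _)
  refine eq_of_subset_of_ncard_le ?_ (ncard_image_of_injective _ g.injective).ge hfin
  rintro _ ⟨α, hα, rfl⟩
  exact ⟨hg.subset (mem_image_of_mem g hα.1), hpos α hα⟩

/-- The elements of `Γ` preserving the positive roots of `Ψ`, the `R`-group attached to `Ψ`. -/
def posStabilizer [LinearOrder K] (Γ : Subgroup (V ≃ₗ[K] V)) (f : Dual K V) (Ψ : Set V) :
    Subgroup (V ≃ₗ[K] V) :=
  Γ ⊓ stabilizer (V ≃ₗ[K] V) (posRoots f Ψ)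

theorem posStabilizer_le [LinearOrder K] {Γ : Subgroup (V ≃ₗ[K] V)} {f : Dual K V} {Ψ : Set V} :
    posStabilizer Γ f Ψ ≤ Γ :=
  inf_le_left

theorem posStabilizer_anti [LinearOrder K] {Γ : Subgroup (V ≃ₗ[K] V)} {f : Dual K V}
    {Ψ Θ : Set V} (hΨ : ∀ g ∈ Γ, g '' Ψ = Ψ) (hΨΘ : Ψ ⊆ Θ) :
    posStabilizer Γ f Θ ≤ posStabilizer Γ f Ψ := by
  have hinter : posRoots f Ψ = Ψ ∩ posRoots f Θ := by
    ext α
    exact ⟨fun hα => ⟨hα.1, hΨΘ hα.1, hα.2⟩, fun hα => ⟨hα.1, hα.2.2⟩⟩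
  rintro g ⟨hgΓ, hg⟩
  refine ⟨hgΓ, ?_⟩
  change g '' posRoots f Ψ = posRoots f Ψ
  rw [hinter, image_inter g.injective, hΨ g hgΓ]
  exact congrArg (Ψ ∩ ·) hg

theorem reflection_mem_closure {s : V → V ≃ₗ[K] V} {Ψ : Set V} {α : V} (hα : α ∈ Ψ) :
    s α ∈ Subgroup.closure (s '' Ψ) :=
  Subgroup.subset_closure (mem_image_of_mem s hα)

theorem closure_reflections_le_stabilizer {s : V → V ≃ₗ[K] V} {Ψ Θ : Set V}
    (h : ∀ α ∈ Ψ, s α '' Θ = Θ) :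
    Subgroup.closure (s '' Ψ) ≤ stabilizer (V ≃ₗ[K] V) Θ := by
  rw [Subgroup.closure_le]
  rintro _ ⟨α, hα, rfl⟩
  exact h α hα

/-- `Ψ` is a subset of the root system `Φ` stable under its own reflections. -/
structure IsRootSubsystem (Φ Ψ : Set V) (coroot : V → Dual K V) (s : V → V ≃ₗ[K] V) : Prop
    extends IsRootSystem Φ coroot s where
  subset : Ψ ⊆ Φ
  image_reflection_subsystem : ∀ α ∈ Ψ, s α '' Ψ = Ψ

namespace IsRootSubsystem

variable {Φ Ψ : Set V} {coroot : V → Dual K V} {s : V → V ≃ₗ[K] V} {α : V} {w : V ≃ₗ[K] V}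

theorem neg_mem (hΨ : IsRootSubsystem Φ Ψ coroot s) (hα : α ∈ Ψ) : -α ∈ Ψ := by
  rw [← hΨ.reflection_self (hΨ.subset hα)]
  exact (hΨ.image_reflection_subsystem α hα).subset (mem_image_of_mem _ hα)

theorem image_eq_of_mem_closure (hΨ : IsRootSubsystem Φ Ψ coroot s)
    (hw : w ∈ Subgroup.closure (s '' Ψ)) : w '' Ψ = Ψ :=
  closure_reflections_le_stabilizer hΨ.image_reflection_subsystem hw

theorem image_ambient_eq_of_mem_closure (hΨ : IsRootSubsystem Φ Ψ coroot s)
    (hw : w ∈ Subgroup.closure (s '' Ψ)) : w '' Φ = Φ :=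
  closure_reflections_le_stabilizer (fun α hα => hΨ.image_reflection α (hΨ.subset hα)) hw

theorem apply_mem_of_mem_closure (hΨ : IsRootSubsystem Φ Ψ coroot s)
    (hw : w ∈ Subgroup.closure (s '' Ψ)) (hα : α ∈ Ψ) : w α ∈ Ψ :=
  (hΨ.image_eq_of_mem_closure hw).subset (mem_image_of_mem w hα)

theorem conj_mem_closure [CharZero K] {g : V ≃ₗ[K] V} (hΨ : IsRootSubsystem Φ Ψ coroot s)
    (hΦ : g '' Φ = Φ) (hg : g '' Ψ = Ψ) (hw : w ∈ Subgroup.closure (s '' Ψ)) :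
    g * w * g⁻¹ ∈ Subgroup.closure (s '' Ψ) := by
  have hle : Subgroup.closure (s '' Ψ) ≤
      (Subgroup.closure (s '' Ψ)).comap (MulAut.conj g).toMonoidHom := by
    rw [Subgroup.closure_le]
    rintro _ ⟨α, hα, rfl⟩
    change g * s α * g⁻¹ ∈ Subgroup.closure (s '' Ψ)
    rw [← hΨ.reflection_map hΦ (hΨ.subset hα)]
    exact reflection_mem_closure (hg.subset (mem_image_of_mem g hα))
  exact hle hw

end IsRootSubsystem

/-- The roots of `Φ` whose reflection lies in `Γ`. -/
def reflectionRoots (Γ : Subgroup (V ≃ₗ[K] V)) (s : V → V ≃ₗ[K] V) (Φ : Set V) : Set V :=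
  {α ∈ Φ | s α ∈ Γ}

section ReflectionRoots

variable {Φ Ψ : Set V} {coroot : V → Dual K V} {s : V → V ≃ₗ[K] V}
  {Γ : Subgroup (V ≃ₗ[K] V)} {g : V ≃ₗ[K] V}

theorem closure_reflections_le (hΨ : Ψ ⊆ reflectionRoots Γ s Φ) :
    Subgroup.closure (s '' Ψ) ≤ Γ := by
  rw [Subgroup.closure_le]
  rintro _ ⟨α, hα, rfl⟩
  exact (hΨ hα).2

theorem IsRootSystem.image_reflectionRoots [CharZero K] (hΦ : IsRootSystem Φ coroot s)
    (hΓ : ∀ g ∈ Γ, g '' Φ = Φ) (hg : g ∈ Γ) :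
    g '' reflectionRoots Γ s Φ = reflectionRoots Γ s Φ := by
  have hmaps : ∀ g ∈ Γ, g '' reflectionRoots Γ s Φ ⊆ reflectionRoots Γ s Φ := by
    rintro g hg _ ⟨α, ⟨hα, hsα⟩, rfl⟩
    refine ⟨(hΓ g hg).subset (mem_image_of_mem g hα), ?_⟩
    rw [hΦ.reflection_map (hΓ g hg) hα]
    exact mul_mem (mul_mem hg hsα) (inv_mem hg)
  refine (hmaps g hg).antisymm fun α hα => ⟨g⁻¹ α, ?_, g.apply_symm_apply α⟩
  exact hmaps _ (inv_mem hg) (mem_image_of_mem _ hα)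

theorem IsRootSystem.isRootSubsystem (hΦ : IsRootSystem Φ coroot s)
    (hΨΦ : Ψ ⊆ reflectionRoots Γ s Φ) (hΨ : ∀ g ∈ Γ, g '' Ψ = Ψ) :
    IsRootSubsystem Φ Ψ coroot s :=
  ⟨hΦ, fun _ hα => (hΨΦ hα).1, fun α hα => hΨ (s α) (hΨΦ hα).2⟩

end ReflectionRoots

variable [LinearOrder K] [IsStrictOrderedRing K]

/-- `D` is a system of simple roots of `Ψ` for the positive system cut out by `f`: it generates the
cone of the positive roots, and the only positive roots made negative by a simple reflection `s δ`
are the multiples of `δ`. -/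
structure IsSimpleSystem (s : V → V ≃ₗ[K] V) (f : Dual K V) (Ψ D : Set V) : Prop where
  subset : D ⊆ posRoots f Ψ
  subset_hull : posRoots f Ψ ⊆ PointedCone.hull K D
  mem_span_of_neg : ∀ δ ∈ D, ∀ β ∈ posRoots f Ψ, f (s δ β) < 0 → β ∈ K ∙ δ

theorem IsSimpleSystem.exists_neg {s : V → V ≃ₗ[K] V} {f h : Dual K V} {Ψ D : Set V} {α : V}
    (hD : IsSimpleSystem s f Ψ D) (hα : α ∈ posRoots f Ψ) (hneg : h α < 0) : ∃ δ ∈ D, h δ < 0 := by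
  have hpos : 0 < (-h) α := by simpa using hneg
  simpa using exists_pos_of_mem_hull (hD.subset_hull hα) hpos

namespace IsRootSubsystem

variable {Φ Ψ D : Set V} {coroot : V → Dual K V} {s : V → V ≃ₗ[K] V} {f h : Dual K V}
  {α δ : V} {w : V ≃ₗ[K] V}

theorem exists_isSimpleSystem (hΨ : IsRootSubsystem Φ Ψ coroot s) (f : Dual K V) :
    ∃ D, IsSimpleSystem s f Ψ D := by
  have hfin : (posRoots f Ψ).Finite := (hΨ.finite.subset hΨ.subset).subset (sep_subset _ _)
  obtain ⟨D, hDsub, hhull, hirr⟩ := exists_irredundant_subset_span (R := {c : K // 0 ≤ c}) hfin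
  refine ⟨D, hDsub, hhull, fun δ hδ β hβ hneg => ?_⟩
  have hδΨ : δ ∈ Ψ := (hDsub hδ).1
  have hγ : -s δ β ∈ posRoots f Ψ :=
    ⟨hΨ.neg_mem (hΨ.apply_mem_of_mem_closure (reflection_mem_closure hδΨ) hβ.1), by simpa⟩
  have hsum : β + -s δ β = coroot δ β • δ := by
    rw [hΨ.reflection_apply δ (hΨ.subset hδΨ)]
    abel
  exact mem_span_singleton_of_add_eq_smul (fun d hd => (hDsub hd).2) hδ (hirr δ hδ) (hhull hβ)
    (hhull hγ) hsum

theorem reflection_apply_mem_posRoots (hΨ : IsRootSubsystem Φ Ψ coroot s)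
    (hf : ∀ α ∈ Ψ, f α ≠ 0) (hD : IsSimpleSystem s f Ψ D) (hδ : δ ∈ D) (hα : α ∈ posRoots f Ψ)
    (hspan : α ∉ K ∙ δ) : s δ α ∈ posRoots f Ψ := by
  have hmem := hΨ.apply_mem_of_mem_closure (reflection_mem_closure (hD.subset hδ).1) hα.1
  exact ⟨hmem, (hf _ hmem).lt_or_gt.resolve_left fun hneg =>
    hspan (hD.mem_span_of_neg δ hδ α hα hneg)⟩

theorem exists_coroot_pos (hΨ : IsRootSubsystem Φ Ψ coroot s) (hD : IsSimpleSystem s f Ψ D)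
    (hα : α ∈ posRoots f Ψ) : ∃ δ ∈ D, 0 < coroot δ α := by
  have hαΦ : α ∈ Φ := hΨ.subset hα.1
  have htwo : 0 < coroot α α := by simp [hΨ.coroot_self α hαΦ]
  obtain ⟨δ, hδ, hpos⟩ := exists_pos_of_mem_hull (hD.subset_hull hα) htwo
  exact ⟨δ, hδ, (hΨ.coroot_pos_comm hαΦ (hΨ.subset (hD.subset hδ).1)).mp hpos⟩

-- Reflecting a positive root in a suitable simple root lowers its value under `f`.
theorem reflection_mem_closure_simple_of_pos (hΨ : IsRootSubsystem Φ Ψ coroot s)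
    (hf : ∀ α ∈ Ψ, f α ≠ 0) (hD : IsSimpleSystem s f Ψ D) (hα : α ∈ posRoots f Ψ) :
    s α ∈ Subgroup.closure (s '' D) := by
  have hfin : (posRoots f Ψ).Finite := (hΨ.finite.subset hΨ.subset).subset (sep_subset _ _)
  by_contra hbad
  obtain ⟨β, ⟨hβ, hβbad⟩, hmin⟩ := exists_min_image
    {β ∈ posRoots f Ψ | s β ∉ Subgroup.closure (s '' D)} f (hfin.subset (sep_subset _ _))
    ⟨α, hα, hbad⟩
  obtain ⟨δ, hδ, hpos⟩ := hΨ.exists_coroot_pos hD hβ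
  have hδΦ : δ ∈ Φ := hΨ.subset (hD.subset hδ).1
  have hsδ : s δ ∈ Subgroup.closure (s '' D) := reflection_mem_closure hδ
  by_cases hspan : β ∈ K ∙ δ
  · exact hβbad (hΨ.reflection_eq_of_mem_span hδΦ (hΨ.subset hβ.1) hspan ▸ hsδ)
  have hlt : f (s δ β) < f β := by
    rw [hΨ.reflection_apply δ hδΦ, map_sub, map_smul, sub_lt_self_iff]
    exact mul_pos hpos (hD.subset hδ).2
  refine hlt.not_ge (hmin _ ⟨hΨ.reflection_apply_mem_posRoots hf hD hδ hβ hspan, fun hmem => ?_⟩)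
  rw [hΨ.reflection_map (hΨ.image_reflection δ hδΦ) (hΨ.subset hβ.1)] at hmem
  exact hβbad <| ((Subgroup.closure (s '' D)).mul_mem_cancel_left hsδ).mp <|
    ((Subgroup.closure (s '' D)).mul_mem_cancel_right (inv_mem hsδ)).mp hmem

theorem closure_simple_eq (hΨ : IsRootSubsystem Φ Ψ coroot s) (hf : ∀ α ∈ Ψ, f α ≠ 0)
    (hD : IsSimpleSystem s f Ψ D) :
    Subgroup.closure (s '' D) = Subgroup.closure (s '' Ψ) := by
  refine le_antisymm (Subgroup.closure_mono (image_mono fun δ hδ => (hD.subset hδ).1)) ?_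
  rw [Subgroup.closure_le]
  rintro _ ⟨α, hα, rfl⟩
  rcases (hf α hα).lt_or_gt with hneg | hpos
  · rw [hΨ.reflection_eq_of_mem_span (hΨ.subset (hΨ.neg_mem hα)) (hΨ.subset hα)
      (Submodule.mem_span_singleton.mpr ⟨-1, by simp⟩)]
    exact hΨ.reflection_mem_closure_simple_of_pos hf hD ⟨hΨ.neg_mem hα, by simpa⟩
  · exact hΨ.reflection_mem_closure_simple_of_pos hf hD ⟨hα, hpos⟩

-- Read from the right, the letter of `u` that first makes the image of `δ` negative is the
-- reflection in that image, hence cancels against `s δ`.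
theorem exists_mul_reflection_mem_pow_of_neg (hΨ : IsRootSubsystem Φ Ψ coroot s)
    (hf : ∀ α ∈ Ψ, f α ≠ 0) (hD : IsSimpleSystem s f Ψ D) (hδ : δ ∈ D) {n : ℕ} {u : V ≃ₗ[K] V}
    (hu : u ∈ (s '' D) ^ n) (hneg : f (u δ) < 0) : ∃ m < n, u * s δ ∈ (s '' D) ^ m := by
  have hδΨ : δ ∈ Ψ := (hD.subset hδ).1
  induction n generalizing u with
  | zero =>
    obtain rfl : u = 1 := by simpa using hu
    exact absurd hneg (hD.subset hδ).2.not_gt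
  | succ n ih =>
    rw [pow_succ'] at hu
    obtain ⟨_, ⟨ε, hε, rfl⟩, t, ht, rfl⟩ := hu
    have htW : t ∈ Subgroup.closure (s '' Ψ) := hΨ.closure_simple_eq hf hD ▸ pow_subset_closure n ht
    have htδ : t δ ∈ Ψ := hΨ.apply_mem_of_mem_closure htW hδΨ
    rcases (hf _ htδ).lt_or_gt with htneg | htpos
    · obtain ⟨m, hm, hmem⟩ := ih ht htneg
      refine ⟨m + 1, by lia, ?_⟩
      rw [pow_succ']
      exact ⟨s ε, mem_image_of_mem s hε, _, hmem, (mul_assoc _ _ _).symm⟩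
    · refine ⟨n, n.lt_succ_self, ?_⟩
      have hεΦ : ε ∈ Φ := hΨ.subset (hD.subset hε).1
      have hsε : s ε = t * s δ * t⁻¹ := by
        rw [← hΨ.reflection_map (hΨ.image_ambient_eq_of_mem_closure htW) (hΨ.subset hδΨ)]
        exact (hΨ.reflection_eq_of_mem_span hεΦ (hΨ.subset htδ)
          (hD.mem_span_of_neg ε hε _ ⟨htδ, htpos⟩ hneg)).symm
      have hcancel : s ε * t * s δ = t := by
        rw [hsε, inv_mul_cancel_right, mul_assoc, hΨ.reflection_mul_self (hΨ.subset hδΨ), mul_one]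
      simpa only [hcancel] using ht

theorem eq_one_of_mem_pow_simple (hΨ : IsRootSubsystem Φ Ψ coroot s) (hf : ∀ α ∈ Ψ, f α ≠ 0)
    (hD : IsSimpleSystem s f Ψ D) {n : ℕ} (hw : w ∈ (s '' D) ^ n)
    (hpos : ∀ α ∈ posRoots f Ψ, 0 < f (w α)) : w = 1 := by
  induction n using Nat.strong_induction_on with
  | _ n ih =>
    obtain _ | n := n
    · simpa using hw
    rw [pow_succ] at hw
    obtain ⟨u, hu, _, ⟨δ, hδ, rfl⟩, rfl⟩ := hw
    have huneg : f (u δ) < 0 := by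
      simpa [hΨ.reflection_self (hΨ.subset (hD.subset hδ).1)] using hpos δ (hD.subset hδ)
    obtain ⟨m, hm, hmem⟩ := hΨ.exists_mul_reflection_mem_pow_of_neg hf hD hδ hu huneg
    exact ih m (by lia) hmem

theorem eq_one_of_mem_closure (hΨ : IsRootSubsystem Φ Ψ coroot s) (hf : ∀ α ∈ Ψ, f α ≠ 0)
    (hw : w ∈ Subgroup.closure (s '' Ψ)) (hpos : ∀ α ∈ posRoots f Ψ, 0 < f (w α)) : w = 1 := by
  obtain ⟨D, hD⟩ := hΨ.exists_isSimpleSystem f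
  rw [← hΨ.closure_simple_eq hf hD] at hw
  obtain ⟨n, hn⟩ := exists_mem_pow_of_mem_closure (by
    rintro _ ⟨δ, hδ, rfl⟩
    exact ⟨δ, hδ, (hΨ.reflection_inv (hΨ.subset (hD.subset hδ).1)).symm⟩) hw
  exact hΨ.eq_one_of_mem_pow_simple hf hD hn hpos

theorem inversions_mul_reflection_subset (hΨ : IsRootSubsystem Φ Ψ coroot s)
    (hf : ∀ α ∈ Ψ, f α ≠ 0) (hD : IsSimpleSystem s f Ψ D)
    (hw : w ∈ Subgroup.closure (s '' Ψ)) (hδ : δ ∈ D) (hneg : h (w δ) < 0) :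
    inversions f h Ψ (w * s δ) ⊆ inversions f h Ψ w := by
  rintro β ⟨⟨hβ, hhβ⟩, hfβ⟩
  rw [hΨ.mul_reflection_inv_apply (hΨ.subset (hD.subset hδ).1)] at hfβ
  have hβ' : w⁻¹ β ∈ Ψ := hΨ.apply_mem_of_mem_closure (inv_mem hw) hβ
  refine ⟨⟨hβ, hhβ⟩, (hf _ hβ').lt_or_gt.resolve_right fun hpos => ?_⟩
  obtain ⟨t, ht⟩ := Submodule.mem_span_singleton.mp (hD.mem_span_of_neg δ hδ _ ⟨hβ', hpos⟩ hfβ)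
  have htpos : 0 < t := by
    rw [← ht, map_smul, smul_eq_mul] at hpos
    exact pos_of_mul_pos_left hpos (hD.subset hδ).2.le
  have hβeq : β = t • w δ := by
    rw [← map_smul, ht]
    exact (w.apply_symm_apply β).symm
  rw [hβeq, map_smul, smul_eq_mul] at hhβ
  exact hhβ.not_gt (mul_neg_of_pos_of_neg htpos hneg)

theorem inversions_mul_reflection_ssubset (hΨ : IsRootSubsystem Φ Ψ coroot s)
    (hf : ∀ α ∈ Ψ, f α ≠ 0) (hD : IsSimpleSystem s f Ψ D)
    (hw : w ∈ Subgroup.closure (s '' Ψ)) (hδ : δ ∈ D) (hneg : h (w δ) < 0) :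
    inversions f h Ψ (w * s δ) ⊂ inversions f h Ψ w := by
  have hδΨ : δ ∈ Ψ := (hD.subset hδ).1
  have hδpos : 0 < f δ := (hD.subset hδ).2
  have hcancel : w⁻¹ (-w δ) = -δ := by
    rw [map_neg]
    exact congrArg Neg.neg (w.symm_apply_apply δ)
  have hmem : -w δ ∈ inversions f h Ψ w :=
    ⟨⟨hΨ.neg_mem (hΨ.apply_mem_of_mem_closure hw hδΨ), by simpa⟩, by simpa [hcancel]⟩
  have hnotMem : -w δ ∉ inversions f h Ψ (w * s δ) := by
    rintro ⟨-, hfδ⟩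
    rw [hΨ.mul_reflection_inv_apply (hΨ.subset hδΨ), hcancel, map_neg,
      hΨ.reflection_self (hΨ.subset hδΨ), neg_neg] at hfδ
    exact hfδ.not_gt hδpos
  exact ssubset_iff_exists.mpr
    ⟨hΨ.inversions_mul_reflection_subset hf hD hw hδ hneg, -w δ, hmem, hnotMem⟩

theorem exists_mem_closure_forall_pos (hΨ : IsRootSubsystem Φ Ψ coroot s)
    (hf : ∀ α ∈ Ψ, f α ≠ 0) (hh : ∀ α ∈ Ψ, h α ≠ 0) :
    ∃ w ∈ Subgroup.closure (s '' Ψ), ∀ α ∈ posRoots f Ψ, 0 < h (w α) := by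
  obtain ⟨D, hD⟩ := hΨ.exists_isSimpleSystem f
  obtain ⟨w, hw, hmin⟩ := exists_minimalFor_of_wellFoundedLT (· ∈ Subgroup.closure (s '' Ψ))
    (fun w => (inversions f h Ψ w).ncard) ⟨1, one_mem _⟩
  refine ⟨w, hw, fun α hα => (hh _ (hΨ.apply_mem_of_mem_closure hw hα.1)).lt_or_gt.resolve_left
    fun hneg => ?_⟩
  obtain ⟨δ, hδ, hδneg⟩ := hD.exists_neg (h := h ∘ₗ w.toLinearMap) hα hneg
  have hfin : (inversions f h Ψ w).Finite :=
    (hΨ.finite.subset hΨ.subset).subset fun β hβ => hβ.1.1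
  have hlt := ncard_lt_ncard (hΨ.inversions_mul_reflection_ssubset hf hD hw hδ hδneg) hfin
  exact hlt.not_ge (hmin (mul_mem hw (reflection_mem_closure (hD.subset hδ).1)) hlt.le)

variable {Γ : Subgroup (V ≃ₗ[K] V)} {g : V ≃ₗ[K] V}

theorem exists_mul_mem_posStabilizer (hΨ : IsRootSubsystem Φ Ψ coroot s)
    (hf : ∀ α ∈ Ψ, f α ≠ 0) (hW : Subgroup.closure (s '' Ψ) ≤ Γ) (hgΓ : g ∈ Γ) (hg : g '' Ψ = Ψ) :
    ∃ w ∈ Subgroup.closure (s '' Ψ), g * w ∈ posStabilizer Γ f Ψ := by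
  obtain ⟨w, hw, hpos⟩ := hΨ.exists_mem_closure_forall_pos (h := f ∘ₗ g.toLinearMap) hf
    fun α hα => hf _ (hg.subset (mem_image_of_mem g hα))
  have hgw : (g * w) '' Ψ = Ψ := by
    rw [show ⇑(g * w) = g ∘ w from rfl, image_comp, hΨ.image_eq_of_mem_closure hw, hg]
  exact ⟨w, hw, mul_mem hgΓ (hW hw), image_posRoots_eq (hΨ.finite.subset hΨ.subset) hgw hpos⟩

theorem disjoint_closure_posStabilizer (hΨ : IsRootSubsystem Φ Ψ coroot s)
    (hf : ∀ α ∈ Ψ, f α ≠ 0) :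
    Disjoint (Subgroup.closure (s '' Ψ)) (posStabilizer Γ f Ψ) := by
  rw [Subgroup.disjoint_def]
  rintro w hw ⟨-, hwpos⟩
  exact hΨ.eq_one_of_mem_closure hf hw fun α hα => (hwpos.subset (mem_image_of_mem w hα)).2

end IsRootSubsystem

theorem R_group_semidirect_decomposition_general {Φ Ψ : Set V} {coroot : V → Dual K V}
    {s : V → V ≃ₗ[K] V} {f : Dual K V} {Γ : Subgroup (V ≃ₗ[K] V)} (hΦ : IsRootSystem Φ coroot s)
    (hΓ : ∀ g ∈ Γ, g '' Φ = Φ) (hf : ∀ α ∈ reflectionRoots Γ s Φ, f α ≠ 0)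
    (hΨΦ : Ψ ⊆ reflectionRoots Γ s Φ) (hΨ : ∀ g ∈ Γ, g '' Ψ = Ψ)
    {W₀ W₀' R R' : Subgroup (V ≃ₗ[K] V)}
    (hW₀ : W₀ = Subgroup.closure (s '' reflectionRoots Γ s Φ))
    (hW₀' : W₀' = Subgroup.closure (s '' Ψ))
    (hR : R = posStabilizer Γ f (reflectionRoots Γ s Φ)) (hR' : R' = posStabilizer Γ f Ψ) :
    R ≤ R' ∧
    (∀ g ∈ R', ∀ w ∈ W₀ ⊓ R', g * w * g⁻¹ ∈ W₀ ⊓ R') ∧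
    (∀ g ∈ R', ∃! p : (V ≃ₗ[K] V) × (V ≃ₗ[K] V), p.1 ∈ W₀ ⊓ R' ∧ p.2 ∈ R ∧ g = p.1 * p.2) ∧
    W₀' ≤ W₀ ∧
    (∀ w ∈ W₀, ∀ u ∈ W₀', w * u * w⁻¹ ∈ W₀') ∧
    ∀ w ∈ W₀, ∃! r, r ∈ W₀ ⊓ R' ∧ w⁻¹ * r ∈ W₀' := by
  subst hW₀ hW₀' hR hR'
  have hΦ₀ : ∀ g ∈ Γ, g '' reflectionRoots Γ s Φ = reflectionRoots Γ s Φ :=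
    fun g hg => hΦ.image_reflectionRoots hΓ hg
  have hsub₀ := hΦ.isRootSubsystem Subset.rfl hΦ₀
  have hsub := hΦ.isRootSubsystem hΨΦ hΨ
  have hfΨ : ∀ α ∈ Ψ, f α ≠ 0 := fun α hα => hf α (hΨΦ hα)
  have hW₀Γ := closure_reflections_le (Subset.refl (reflectionRoots Γ s Φ))
  have hW₀'W₀ := Subgroup.closure_mono (image_mono (f := s) hΨΦ)
  have hRR' := posStabilizer_anti (f := f) hΨ hΨΦ
  refine ⟨hRR', fun g hg w hw => Subgroup.mem_inf.mpr ⟨?_, ?_⟩, fun g hg => ?_,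
    hW₀'W₀, fun w hw u hu => ?_, fun w hw => ?_⟩
  · exact hsub₀.conj_mem_closure (hΓ g hg.1) (hΦ₀ g hg.1) hw.1
  · exact mul_mem (mul_mem hg hw.2) (inv_mem hg)
  · have hg' := inv_mem (posStabilizer_le hg)
    exact existsUnique_mul_eq_of_disjoint hRR' (hsub₀.disjoint_closure_posStabilizer hf) hg
      (hsub₀.exists_mul_mem_posStabilizer hf hW₀Γ hg' (hΦ₀ _ hg'))
  · exact hsub.conj_mem_closure (hΓ w (hW₀Γ hw)) (hΨ w (hW₀Γ hw)) hu
  · exact existsUnique_inv_mul_mem_of_disjoint hW₀'W₀ (hsub.disjoint_closure_posStabilizer hfΨ) hw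
      (hsub.exists_mul_mem_posStabilizer hfΨ (hW₀'W₀.trans hW₀Γ) (hW₀Γ hw) (hΨ w (hW₀Γ hw)))

end RootSystem

/- STATEMENT 9: With `Φ⁰' ⊆ Φ⁰` a Γ-stable subset, `W⁰' := ⟨s_α : α ∈ Φ⁰'⟩`,
`(Φ⁰')⁺ := Φ⁰' ∩ (Φ⁰)⁺`, `R' := {g ∈ Γ | g((Φ⁰')⁺) = (Φ⁰')⁺}` and
`R := {g ∈ Γ | g((Φ⁰)⁺) = (Φ⁰)⁺}`, the following hold:
(i) `R ⊆ R'`;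
(ii) `R⁰ := W⁰ ∩ R'` is a normal subgroup of `R'`;
(iii) every element of `R'` factors uniquely as `u·v` with `u ∈ R⁰` and `v ∈ R`, so that
`R'` is the semidirect product of `R⁰` by `R`;
(iv) `W⁰'` is a normal subgroup of `W⁰`, and the composite of the inclusion `R⁰ ↪ W⁰`
with the quotient map `W⁰ → W⁰/W⁰'` is an isomorphism `R⁰ ≅ W⁰/W⁰'` (formulated
elementwise: each `w ∈ W⁰` lies in the `W⁰'`-coset of exactly one element of `R⁰`). -/
theorem R_group_semidirect_decomposition
    (V : Type*) [AddCommGroup V] [Module ℝ V] [FiniteDimensional ℝ V]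
    (Φ : Set V) (hfin : Φ.Finite) (h0 : (0 : V) ∉ Φ)
    (hspan : Submodule.span ℝ Φ = ⊤)
    (coroot : V → Module.Dual ℝ V)
    (hcoroot : ∀ α ∈ Φ, coroot α α = 2)
    (s : V → (V ≃ₗ[ℝ] V))
    (hs : ∀ α ∈ Φ, ∀ x : V, s α x = x - coroot α x • α)
    (hmaps : ∀ α ∈ Φ, ⇑(s α) '' Φ = Φ)
    (hred : ∀ α ∈ Φ, ∀ t : ℝ, t • α ∈ Φ → t = 1 ∨ t = -1)
    (Γ : Subgroup (V ≃ₗ[ℝ] V)) (hΓ : ∀ g ∈ Γ, ⇑g '' Φ = Φ)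
    (Φ0 : Set V) (hΦ0 : Φ0 = {α ∈ Φ | s α ∈ Γ})
    (W0 : Subgroup (V ≃ₗ[ℝ] V)) (hW0 : W0 = Subgroup.closure (s '' Φ0))
    (f : Module.Dual ℝ V) (hf : ∀ α ∈ Φ0, f α ≠ 0)
    (Φ0plus : Set V) (hΦ0plus : Φ0plus = {α ∈ Φ0 | 0 < f α})
    (Φ0' : Set V) (hΦ0'sub : Φ0' ⊆ Φ0)
    (hΦ0'stable : ∀ g ∈ Γ, ⇑g '' Φ0' = Φ0')
    (W0' : Subgroup (V ≃ₗ[ℝ] V)) (hW0' : W0' = Subgroup.closure (s '' Φ0'))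
    (Φ0'plus : Set V) (hΦ0'plus : Φ0'plus = Φ0' ∩ Φ0plus)
    (R' : Set (V ≃ₗ[ℝ] V)) (hR' : R' = {g | g ∈ Γ ∧ ⇑g '' Φ0'plus = Φ0'plus})
    (R : Set (V ≃ₗ[ℝ] V)) (hR : R = {g | g ∈ Γ ∧ ⇑g '' Φ0plus = Φ0plus})
    (R0 : Set (V ≃ₗ[ℝ] V)) (hR0 : R0 = {w | w ∈ W0 ∧ w ∈ R'}) :
    -- (i) R ⊆ R'
    R ⊆ R' ∧
    -- (ii) R⁰ is a normal subgroup of R'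
    (∀ g ∈ R', ∀ w ∈ R0, g * w * g⁻¹ ∈ R0) ∧
    -- (iii) unique factorization of elements of R' as u·v with u ∈ R⁰, v ∈ R
    (∀ g ∈ R', ∃! p : (V ≃ₗ[ℝ] V) × (V ≃ₗ[ℝ] V),
      p.1 ∈ R0 ∧ p.2 ∈ R ∧ g = p.1 * p.2) ∧
    -- (iv) W⁰' ⊴ W⁰ and R⁰ → W⁰/W⁰' is bijective
    (W0' ≤ W0 ∧ (∀ w ∈ W0, ∀ u ∈ W0', w * u * w⁻¹ ∈ W0') ∧
      (∀ w ∈ W0, ∃! r : V ≃ₗ[ℝ] V, r ∈ R0 ∧ w⁻¹ * r ∈ W0')) := by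
  have hpos : Φ0'plus = posRoots f Φ0' := by
    subst hΦ0'plus hΦ0plus
    exact Set.ext fun α => ⟨fun hα => ⟨hα.1, hα.2.2⟩, fun hα => ⟨hα.1, hΦ0'sub hα.1, hα.2⟩⟩
  subst hpos hΦ0plus hΦ0 hR0 hR hR'
  exact R_group_semidirect_decomposition_general ⟨hfin, hspan, hcoroot, hs, hmaps⟩ hΓ hf hΦ0'sub
    hΦ0'stable hW0 hW0' rfl rfl
end
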